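/- Let ρ₀ satisfy the stated first-order equation with a < ρ₀ < b. Then the function z ↦ b·ln((ρ₀(z) − a)/(ρ₀(z) + a)) − a·ln((b − ρ₀(z))/(b + ρ₀(z))) − √2·a·b·(b² − a²)·z is constant on ℝ; equivalently, there is c₀ ∈ ℝ such that c₀ + √2ab(b² − a²)z = b·ln((ρ₀(z) − a)/(ρ₀(z) + a)) − a·ln((b − ρ₀(z))/(b + ρ₀(z))) for all z ∈ ℝ. -/

import Mathlib

/-! The equation is autonomous, so the variables separate. By partial fractions,
`2ab(b² − a²) / ((x² − a²)(b² − x²)) = b · 2a / (x² − a²) − a · 2b / (x² − b²)`, and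
`log |(x − c) / (x + c)|` is a primitive of `2c / (x² − c²)`. -/

theorem exists_add_smul_eq_comp_of_deriv_smul_deriv_eq_const {𝕜 E : Type*} [RCLike 𝕜]
    [NormedAddCommGroup E] [NormedSpace 𝕜 E] {s : Set 𝕜} (hs : IsOpen s) (hs' : IsPreconnected s)
    {ρ ρ' : 𝕜 → 𝕜} {G G' : 𝕜 → E} {v : E}
    (hρ : ∀ z ∈ s, HasDerivAt ρ (ρ' z) z) (hG : ∀ z ∈ s, HasDerivAt G (G' z) (ρ z))
    (hv : ∀ z ∈ s, ρ' z • G' z = v) :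
    ∃ c : E, ∀ z ∈ s, c + z • v = G (ρ z) := by
  have hcomp : ∀ z ∈ s, HasDerivAt (G ∘ ρ) v z := fun z hz ↦
    hv z hz ▸ (hG z hz).scomp z (hρ z hz)
  have hlin : ∀ z, HasDerivAt (fun w : 𝕜 ↦ w • v) v z := fun z ↦ by
    simpa using (hasDerivAt_id z).smul_const v
  obtain ⟨c, hc⟩ := hs.exists_eq_add_of_deriv_eq hs'
    (fun z hz ↦ (hcomp z hz).differentiableAt.differentiableWithinAt)
    (fun z _ ↦ (hlin z).differentiableAt.differentiableWithinAt)
    (fun z hz ↦ (hcomp z hz).deriv.trans (hlin z).deriv.symm)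
  exact ⟨c, fun z hz ↦ (add_comm c (z • v)).trans (hc hz).symm⟩

theorem hasDerivAt_log_abs_sub_div_add {c x : ℝ} (hx : x ^ 2 ≠ c ^ 2) :
    HasDerivAt (fun y ↦ Real.log |(y - c) / (y + c)|) (2 * c / (x ^ 2 - c ^ 2)) x := by
  have hsub : x - c ≠ 0 := fun h ↦ hx (by rw [sub_eq_zero.mp h])
  have hadd : x + c ≠ 0 := fun h ↦ hx (by rw [eq_neg_of_add_eq_zero_left h, neg_sq])
  have hquot : HasDerivAt (fun y ↦ (y - c) / (y + c)) (2 * c / (x + c) ^ 2) x :=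
    (((hasDerivAt_id x).sub_const c).div ((hasDerivAt_id x).add_const c) hadd).congr_deriv
      (by simp only [id]; ring)
  simp only [Real.log_abs]
  refine (hquot.log (div_ne_zero hsub hadd)).congr_deriv ?_
  rw [sq_sub_sq]
  field_simp

/-- The time map of the equation `ρ' = κ (ρ² − a²) (b² − ρ²)`: up to an additive constant,
`2κab(b² − a²)` times the time at which a solution takes the value `x`. The absolute values make
it valid on every interval that avoids the equilibria `±a`, `±b`. -/
noncomputable def quarticTimeMap (a b x : ℝ) : ℝ :=
  b * Real.log |(x - a) / (x + a)| - a * Real.log |(b - x) / (b + x)|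

theorem hasDerivAt_quarticTimeMap {a b x : ℝ} (ha : x ^ 2 ≠ a ^ 2) (hb : x ^ 2 ≠ b ^ 2) :
    HasDerivAt (quarticTimeMap a b)
      (2 * a * b * (b ^ 2 - a ^ 2) / ((x ^ 2 - a ^ 2) * (b ^ 2 - x ^ 2))) x := by
  have hswap : quarticTimeMap a b =
      fun y ↦ b * Real.log |(y - a) / (y + a)| - a * Real.log |(y - b) / (y + b)| := by
    funext y
    rw [quarticTimeMap, abs_div (b - y), abs_sub_comm b y, add_comm b y, ← abs_div]
  rw [hswap]
  refine (((hasDerivAt_log_abs_sub_div_add ha).const_mul b).sub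
    ((hasDerivAt_log_abs_sub_div_add hb).const_mul a)).congr_deriv ?_
  have ha' : x ^ 2 - a ^ 2 ≠ 0 := sub_ne_zero.mpr ha
  have hb' : x ^ 2 - b ^ 2 ≠ 0 := sub_ne_zero.mpr hb
  rw [← neg_sub (x ^ 2) (b ^ 2)]
  field_simp
  ring

theorem statement4_general {a b κ : ℝ} {s : Set ℝ} (hs : IsOpen s) (hs' : IsPreconnected s)
    {ρ : ℝ → ℝ} (hρ : ∀ z ∈ s, HasDerivAt ρ (κ * (ρ z ^ 2 - a ^ 2) * (b ^ 2 - ρ z ^ 2)) z)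
    (ha : ∀ z ∈ s, ρ z ^ 2 ≠ a ^ 2) (hb : ∀ z ∈ s, ρ z ^ 2 ≠ b ^ 2) :
    ∃ c₀ : ℝ, ∀ z ∈ s,
      c₀ + 2 * κ * a * b * (b ^ 2 - a ^ 2) * z = quarticTimeMap a b (ρ z) := by
  have hspeed : ∀ z ∈ s, (κ * (ρ z ^ 2 - a ^ 2) * (b ^ 2 - ρ z ^ 2)) •
      (2 * a * b * (b ^ 2 - a ^ 2) / ((ρ z ^ 2 - a ^ 2) * (b ^ 2 - ρ z ^ 2))) =
        2 * κ * a * b * (b ^ 2 - a ^ 2) := fun z hz ↦ by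
    have ha' : ρ z ^ 2 - a ^ 2 ≠ 0 := sub_ne_zero.mpr (ha z hz)
    have hb' : b ^ 2 - ρ z ^ 2 ≠ 0 := sub_ne_zero.mpr (hb z hz).symm
    rw [smul_eq_mul]
    field_simp
  obtain ⟨c₀, hc₀⟩ := exists_add_smul_eq_comp_of_deriv_smul_deriv_eq_const hs hs' hρ
    (fun z hz ↦ hasDerivAt_quarticTimeMap (ha z hz) (hb z hz)) hspeed
  exact ⟨c₀, fun z hz ↦ by rw [← hc₀ z hz, smul_eq_mul, mul_comm z]⟩

/-- If `ρ₀' = (√2/2)(ρ₀² − a²)(b² − ρ₀²)` with `a < ρ₀ < b`, then there is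
`c₀ ∈ ℝ` such that for all `z`,
`c₀ + √2 a b (b² − a²) z = b ln((ρ₀ − a)/(ρ₀ + a)) − a ln((b − ρ₀)/(b + ρ₀))`. -/
theorem statement4 (a b : ℝ) (ha : 0 < a) (hab : a < b) (ρ₀ : ℝ → ℝ)
    (hreg : ContDiff ℝ 1 ρ₀)
    (hderiv : ∀ z, deriv ρ₀ z =
      Real.sqrt 2 / 2 * ((ρ₀ z) ^ 2 - a ^ 2) * (b ^ 2 - (ρ₀ z) ^ 2))
    (hbnd : ∀ z, a < ρ₀ z ∧ ρ₀ z < b) :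
    ∃ c₀ : ℝ, ∀ z : ℝ,
      c₀ + Real.sqrt 2 * a * b * (b ^ 2 - a ^ 2) * z =
        b * Real.log ((ρ₀ z - a) / (ρ₀ z + a)) - a * Real.log ((b - ρ₀ z) / (b + ρ₀ z)) := by
  simpa only [Set.mem_univ, forall_const, mul_div_cancel₀ _ (two_ne_zero' ℝ), quarticTimeMap,
    Real.log_abs] using statement4_general (a := a) (b := b) (κ := Real.sqrt 2 / 2)
      isOpen_univ isPreconnected_univ
      (fun z _ ↦ hderiv z ▸ (hreg.differentiable one_ne_zero z).hasDerivAt)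
      (fun z _ ↦ (pow_lt_pow_left₀ (hbnd z).1 ha.le two_ne_zero).ne')
      (fun z _ ↦ (pow_lt_pow_left₀ (hbnd z).2 (ha.trans (hbnd z).1).le two_ne_zero).ne)
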